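/- Two valid chain elements x and y satisfy (x ⊑ y or y ⊑ x) if and only if there exist natural numbers m and n with step^[m] x = step^[n] y; in particular, two elements share a chain exactly when some common element is reachable from both by finitely many steps. -/

import Mathlib

def SB.Valid {α β : Type*} (P : Set α) (Q : Set β) : α ⊕ β → Prop
  | Sum.inl p => p ∈ P
  | Sum.inr q => q ∈ Q

def SB.step {α β : Type*} (f : α → β) (g : β → α) : α ⊕ β → α ⊕ β
  | Sum.inl p => Sum.inr (f p)
  | Sum.inr q => Sum.inl (g q)

def SB.ChainLE {α β : Type*} (f : α → β) (g : β → α) : α ⊕ β → α ⊕ β → Prop :=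
  Relation.ReflTransGen (fun x y => y = SB.step f g x)

section Iterate

variable {γ : Type*} {s : γ → γ} {V : Set γ} {x y : γ}

theorem reflTransGen_eq_apply_iff_exists_iterate :
    Relation.ReflTransGen (fun a b => b = s a) x y ↔ ∃ n : ℕ, s^[n] x = y := by
  constructor
  · intro h
    induction h with
    | refl => exact ⟨0, rfl⟩
    | tail _ hstep ih =>
      obtain ⟨n, rfl⟩ := ih
      exact ⟨n + 1, (Function.iterate_succ_apply' s n x).trans hstep.symm⟩
  · rintro ⟨n, rfl⟩
    induction n with
    | zero => exact .refl
    | succ n ih => exact ih.tail (Function.iterate_succ_apply' s n x)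

theorem iterate_eq_iterate_add_iff_of_injOn (hmaps : Set.MapsTo s V V) (hinj : Set.InjOn s V)
    (hx : x ∈ V) (hy : y ∈ V) (m k : ℕ) : s^[m] x = s^[m + k] y ↔ x = s^[k] y := by
  rw [Function.iterate_add_apply, (hinj.iterate hmaps m).eq_iff hx (hmaps.iterate k hy)]

theorem comparable_iff_common_reachable_general (hmaps : Set.MapsTo s V V)
    (hinj : Set.InjOn s V) (hx : x ∈ V) (hy : y ∈ V) :
    (Relation.ReflTransGen (fun a b => b = s a) x y ∨
        Relation.ReflTransGen (fun a b => b = s a) y x) ↔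
      ∃ m n : ℕ, s^[m] x = s^[n] y := by
  simp only [reflTransGen_eq_apply_iff_exists_iterate]
  constructor
  · rintro (⟨n, hxy⟩ | ⟨n, hyx⟩)
    · exact ⟨n, 0, hxy⟩
    · exact ⟨0, n, hyx.symm⟩
  · rintro ⟨m, n, h⟩
    rcases le_total m n with hmn | hnm
    · obtain ⟨k, rfl⟩ := exists_add_of_le hmn
      exact .inr ⟨k, ((iterate_eq_iterate_add_iff_of_injOn hmaps hinj hx hy m k).1 h).symm⟩
    · obtain ⟨k, rfl⟩ := exists_add_of_le hnm
      exact .inl ⟨k, ((iterate_eq_iterate_add_iff_of_injOn hmaps hinj hy hx n k).1 h.symm).symm⟩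

end Iterate

namespace SB

variable {α β : Type*} {P : Set α} {Q : Set β} {f : α → β} {g : β → α}

theorem mapsTo_step (hf : Set.MapsTo f P Q) (hg : Set.MapsTo g Q P) :
    Set.MapsTo (step f g) {z | Valid P Q z} {z | Valid P Q z} := by
  rintro (p | q) hz
  · exact hf hz
  · exact hg hz

theorem injOn_step (hf : Set.InjOn f P) (hg : Set.InjOn g Q) :
    Set.InjOn (step f g) {z | Valid P Q z} := by
  rintro (p | q) hz (p' | q') hz' heq
  · exact congrArg Sum.inl (hf hz hz' (Sum.inr.inj heq))
  · cases heq
  · cases heq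
  · exact congrArg Sum.inr (hg hz hz' (Sum.inl.inj heq))

end SB

theorem comparable_iff_common_reachable {α β : Type*} (P : Set α) (Q : Set β)
    (f : α → β) (g : β → α)
    (hfm : Set.MapsTo f P Q) (hfi : Set.InjOn f P)
    (hgm : Set.MapsTo g Q P) (hgi : Set.InjOn g Q)
    (x y : α ⊕ β) (hx : SB.Valid P Q x) (hy : SB.Valid P Q y) :
    (SB.ChainLE f g x y ∨ SB.ChainLE f g y x) ↔
      ∃ m n : ℕ, (SB.step f g)^[m] x = (SB.step f g)^[n] y :=
  comparable_iff_common_reachable_general (SB.mapsTo_step hfm hgm) (SB.injOn_step hfi hgi) hx hy
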